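/- (Zero fill-in sparse Cholesky factorization) Let G(V,E) be a chordal graph on V = {1,…,n} and let Z ∈ S^n(E,0) be positive definite. Then there exist a permutation matrix P ∈ R^{n×n} and a lower-triangular matrix L ∈ R^{n×n} such that P Z P^T = L L^T and P^T (L + L^T) P ∈ S^n(E,0). -/

import Mathlib

/-!
The proof combines Dirac's theorem on chordal graphs with symmetric Gaussian elimination.

*Dirac's theorem.* If `v ∈ S` has a non-neighbour in `S`, then some simplicial vertex of the induced
graph on `S` is a non-neighbour of `v` (`exists_simplicial_of_not_adj`). Let `C` be a connected
component of the set of non-neighbours of `v` in `S`, and let `T` be the set of neighbours of `v`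
that are adjacent to `C`. Two nonadjacent vertices of `T`, joined by a shortest path through `C` and
closed up through `v`, would form a chordless cycle of length at least four, so `T` is a clique
(`adj_of_joined`). Now `C ∪ T` is smaller than `S`. If it is a clique, any vertex of `C` is simplicial
in it; otherwise the induction hypothesis yields a simplicial vertex of `C ∪ T` lying in `C`. Such a
vertex is simplicial in `S`, because all its neighbours in `S` lie in `C ∪ T`.

*Elimination.* Eliminating a simplicial vertex `v` replaces `Z` by the Schur complement
`Z i j - Z i v * Z j v / Z v v`. An entry changes only if `i` and `j` are both adjacent to `v`,
hence to each other, so the sparsity pattern persists; positive definiteness on the remaining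
vertices persists as well. Iterating (`exists_factor`) gives `Z = M * Mᵀ` with `M` of pattern `E` and
lower triangular for the order of elimination; `L` is `M` with rows and columns listed in that order.
-/

open Finset Matrix

/-- The edge relation is symmetric. -/
def EdgeSymm {V : Type*} (E : V → V → Prop) : Prop := ∀ i j, E i j → E j i

/-- Every vertex has a self-loop. -/
def HasSelfLoops {V : Type*} (E : V → V → Prop) : Prop := ∀ i, E i i

/-- A clique: a finite set of pairwise adjacent vertices. -/
def IsGraphClique {V : Type*} (E : V → V → Prop) (C : Finset V) : Prop :=
  ∀ i ∈ C, ∀ j ∈ C, E i j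

/-- A maximal clique: a clique not properly contained in any other clique. -/
def IsMaximalGraphClique {V : Type*} (E : V → V → Prop) (C : Finset V) : Prop :=
  IsGraphClique E C ∧ ∀ D : Finset V, IsGraphClique E D → C ⊆ D → D = C

/-- Chordality: every cycle of length at least 4 (given by an injective map
`c : Fin (k+4) → V` whose cyclically consecutive vertices are adjacent) has a chord,
i.e. an edge joining two distinct, nonconsecutive vertices of the cycle. -/
def IsChordalRel {V : Type*} (E : V → V → Prop) : Prop :=
  ∀ (k : ℕ) (c : Fin (k + 4) → V), Function.Injective c →
    (∀ i, E (c i) (c (i + 1))) →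
    ∃ i j : Fin (k + 4), i ≠ j ∧ j ≠ i + 1 ∧ i ≠ j + 1 ∧ E (c i) (c j)

/-- `X ∈ S^n(E,0)`: symmetric with sparsity pattern `E`. -/
def HasSparsity {n : ℕ} (E : Fin n → Fin n → Prop) (X : Matrix (Fin n) (Fin n) ℝ) : Prop :=
  X.IsSymm ∧ ∀ i j, ¬ E i j → X i j = 0

/-- The 0/1 matrix `E_C ∈ R^{|C| × n}` with `(E_C)_{ij} = 1` iff the `i`-th element of `C`
(in increasing order) equals `j`. -/
def cliqueMat {n : ℕ} (C : Finset (Fin n)) : Matrix (Fin C.card) (Fin n) ℝ :=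
  Matrix.of fun i j => if (↑(C.orderIsoOfFin rfl i) : Fin n) = j then 1 else 0

/-- `X ∈ S^n_+(E,?)`: `X` admits a positive semidefinite completion. -/
def HasPSDCompletion {n : ℕ} (E : Fin n → Fin n → Prop) (X : Matrix (Fin n) (Fin n) ℝ) : Prop :=
  ∃ Xb : Matrix (Fin n) (Fin n) ℝ, Xb.PosSemidef ∧ ∀ i j, E i j → Xb i j = X i j

/-! ### Simplicial vertices of chordal graphs -/

/-- `w` is simplicial in `S`: its neighbours in `S` are pairwise adjacent. Membership of `w` in `S`
is not part of the definition. -/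
def IsSimplicialIn {V : Type*} (E : V → V → Prop) (S : Finset V) (w : V) : Prop :=
  ∀ i ∈ S, ∀ j ∈ S, E w i → E w j → E i j

/-- There is a walk of length `m` from `x` to `y` whose interior vertices lie in `C`. The walk is
the restriction of a sequence `p : ℕ → V` to `{0, …, m}`; later values are irrelevant. -/
def JoinedVia {V : Type*} (E : V → V → Prop) (C : Finset V) (x y : V) (m : ℕ) : Prop :=
  ∃ p : ℕ → V, p 0 = x ∧ p m = y ∧ (∀ t < m, E (p t) (p (t + 1))) ∧
    ∀ t, 0 < t → t < m → p t ∈ C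

lemma JoinedVia.snoc {V : Type*} {E : V → V → Prop} {C : Finset V} {x c d : V} {m : ℕ}
    (h : JoinedVia E C x c m) (hc : c ∈ C) (hcd : E c d) : JoinedVia E C x d (m + 1) := by
  obtain ⟨p, h0, hm, hE, hC⟩ := h
  refine ⟨fun t => if t ≤ m then p t else d, by simpa using h0, by simp, ?_, ?_⟩
  · intro t ht
    rcases Nat.lt_succ_iff_lt_or_eq.1 ht with h | rfl
    · simpa [h.le, Nat.succ_le_of_lt h] using hE t h
    · simpa [hm] using hcd
  · intro t h1 h2
    rcases Nat.lt_succ_iff_lt_or_eq.1 h2 with h | rfl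
    · simpa [h.le] using hC t h1 h
    · simpa [hm] using hc

/-- Two neighbours `x`, `y` of `v` that are joined through a set of non-neighbours of `v` are
adjacent: otherwise a shortest such walk, closed up through `v`, is a chordless cycle. -/
lemma adj_of_joined {V : Type*} {E : V → V → Prop} (hsymm : EdgeSymm E) (hloop : HasSelfLoops E)
    (hch : IsChordalRel E) {C : Finset V} {v x y : V} (hC : ∀ c ∈ C, ¬ E v c)
    (hxv : x ≠ v) (hyv : y ≠ v) (hx : E v x) (hy : E v y) (h : ∃ m, JoinedVia E C x y m) :
    E x y := by
  classical
  by_contra hxy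
  obtain ⟨p, h0, hm, hE, hpC⟩ := Nat.find_spec h
  have hmin := fun k (hk : k < Nat.find h) => Nat.find_min h hk
  generalize Nat.find h = m at hm hE hpC hmin
  -- A chord of the walk would give a shorter walk.
  have hshort : ∀ i j, i + 1 < j → j ≤ m → ¬ E (p i) (p j) := by
    intro i j hij hjm hadj
    refine hmin (m - (j - i - 1)) (by omega)
      ⟨fun t => if t ≤ i then p t else p (t + (j - i - 1)), by simpa using h0, ?_, ?_, ?_⟩
    · have h1 : ¬ m - (j - i - 1) ≤ i := by omega
      have h2 : m - (j - i - 1) + (j - i - 1) = m := by omega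
      simp only [h1, if_false, h2, hm]
    · intro t ht
      rcases lt_trichotomy t i with h | rfl | h
      · simpa [h.le, Nat.succ_le_of_lt h] using hE t (by omega)
      · have h2 : t + 1 + (j - t - 1) = j := by omega
        simpa [h2] using hadj
      · have h1 : ¬ t ≤ i := by omega
        have h2 : ¬ t + 1 ≤ i := by omega
        have h3 : t + 1 + (j - i - 1) = t + (j - i - 1) + 1 := by omega
        simp only [h1, h2, if_false, h3]
        exact hE _ (by omega)
    · intro t ht0 htm
      by_cases h : t ≤ i
      · simpa [h] using hpC t ht0 (by omega)
      · simpa [h] using hpC (t + (j - i - 1)) (by omega) (by omega)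
  have hm2 : 2 ≤ m := by
    by_contra hlt
    have : m = 0 ∨ m = 1 := by omega
    rcases this with rfl | rfl
    · exact hxy (by rw [← h0, ← hm]; exact hloop _)
    · exact hxy (by rw [← h0, ← hm]; exact hE 0 (by omega))
  -- Loops are edges, so a repeated vertex also produces a chord of the walk.
  have hinj : ∀ i j, i < j → j ≤ m → p i ≠ p j := by
    intro i j hij hjm heq
    by_cases h1 : i + 1 < j
    · exact hshort i j h1 hjm (by rw [heq]; exact hloop _)
    · obtain rfl : j = i + 1 := by omega
      by_cases h2 : i + 1 < m
      · exact hshort i (i + 1 + 1) (by omega) (by omega) (by rw [heq]; exact hE _ h2)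
      · exact hshort (i - 1) (i + 1) (by omega) hjm (by
          rw [← heq]
          have := hE (i - 1) (by omega)
          rwa [show i - 1 + 1 = i by omega] at this)
  have hvp : ∀ i ≤ m, p i ≠ v := by
    intro i him
    rcases Nat.eq_zero_or_pos i with rfl | hi
    · rwa [h0]
    · rcases him.lt_or_eq with h | rfl
      · intro heq
        exact hC _ (hpC i hi h) (by rw [heq]; exact hloop _)
      · rwa [hm]
  obtain ⟨k, rfl⟩ : ∃ k, m = k + 2 := ⟨m - 2, by omega⟩
  let q : ℕ → V := fun t => if t = 0 then v else p (t - 1)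
  have hqinj : ∀ a b, a < b → b < k + 4 → q a ≠ q b := by
    intro a b hab hb
    have hb0 : b ≠ 0 := by omega
    by_cases ha : a = 0
    · simpa [q, ha, hb0] using (hvp (b - 1) (by omega)).symm
    · simpa [q, ha, hb0] using hinj (a - 1) (b - 1) (by omega) (by omega)
  have hqch : ∀ a b, a + 1 < b → b < k + 4 → ¬ (a = 0 ∧ b = k + 3) → ¬ E (q a) (q b) := by
    intro a b hab hb hne
    have hb0 : b ≠ 0 := by omega
    by_cases ha : a = 0
    · simpa [q, ha, hb0] using hC _ (hpC (b - 1) (by omega) (by omega))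
    · simpa [q, ha, hb0] using hshort (a - 1) (b - 1) (by omega) (by omega)
  have hval : ∀ i : Fin (k + 4), (i + 1).val = if i.val = k + 3 then 0 else i.val + 1 := by
    intro i
    rw [Fin.val_add_one]
    simp [Fin.ext_iff]
  obtain ⟨i, j, hij, h1, h2, hadj⟩ := hch k (fun i => q i.val) (by
      intro a b hab
      rcases lt_trichotomy a.val b.val with h | h | h
      · exact absurd hab (hqinj _ _ h b.2)
      · exact Fin.ext h
      · exact absurd hab.symm (hqinj _ _ h a.2)) (by
      intro i
      simp only [hval]
      by_cases hi : i.val = k + 3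
      · simp only [q, hi, if_true]
        simpa [hm] using hsymm _ _ hy
      · by_cases hi0 : i.val = 0
        · simpa [q, hi0, h0] using hx
        · have := hE (i.val - 1) (by omega)
          rw [show i.val - 1 + 1 = i.val by omega] at this
          simpa [q, hi, hi0] using this)
  simp only [Ne, Fin.ext_iff, hval] at hij h1 h2
  have hi := i.2
  have hj := j.2
  rcases lt_or_gt_of_ne hij with h | h
  · refine hqch i.val j.val ?_ hj ?_ hadj
    · split_ifs at h1 <;> omega
    · rintro ⟨ha, hb⟩
      rw [if_pos hb] at h2
      exact h2 ha
  · refine hqch j.val i.val ?_ hi ?_ (hsymm _ _ hadj)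
    · split_ifs at h2 <;> omega
    · rintro ⟨ha, hb⟩
      rw [if_pos hb] at h1
      exact h1 ha

/-- Dirac's theorem in the form suited to induction on `S`: a vertex with a non-neighbour in `S` has
a simplicial non-neighbour in `S`. -/
lemma exists_simplicial_of_not_adj {V : Type*} {E : V → V → Prop} (hsymm : EdgeSymm E)
    (hloop : HasSelfLoops E) (hch : IsChordalRel E) (S : Finset V) :
    ∀ v ∈ S, (∃ u ∈ S, ¬ E v u) → ∃ w ∈ S, ¬ E v w ∧ IsSimplicialIn E S w := by
  classical
  induction S using Finset.strongInduction with
  | H S ih =>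
  rintro v hv ⟨u, hu, hvu⟩
  let R : V → V → Prop := fun a b => E a b ∧ (a ∈ S ∧ ¬ E v a) ∧ (b ∈ S ∧ ¬ E v b)
  have hRsymm : Std.Symm R := ⟨fun a b h => ⟨hsymm _ _ h.1, h.2.2, h.2.1⟩⟩
  let C : Finset V := {c ∈ S | ¬ E v c ∧ Relation.ReflTransGen R u c}
  let T : Finset V := {t ∈ S | t ≠ v ∧ E v t ∧ ∃ c ∈ C, E c t}
  have hCmem : ∀ c, c ∈ C ↔ c ∈ S ∧ ¬ E v c ∧ Relation.ReflTransGen R u c := fun c => by simp [C]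
  have hTmem : ∀ t, t ∈ T ↔ t ∈ S ∧ t ≠ v ∧ E v t ∧ ∃ c ∈ C, E c t := fun c => by simp [T]
  have huC : u ∈ C := (hCmem u).2 ⟨hu, hvu, .refl⟩
  have hTclique : ∀ x ∈ T, ∀ y ∈ T, E x y := by
    intro x hx y hy
    obtain ⟨-, hxv, hvx, c, hc, hcx⟩ := (hTmem x).1 hx
    obtain ⟨-, hyv, hvy, d, hd, hdy⟩ := (hTmem y).1 hy
    refine adj_of_joined hsymm hloop hch (C := C) (fun c hc => ((hCmem c).1 hc).2.1) hxv hyv hvx hvy ?_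
    have huc := ((hCmem c).1 hc).2.2
    have hcd : Relation.ReflTransGen R c d :=
      (Relation.ReflTransGen.stdSymm.symm _ _ huc).trans ((hCmem d).1 hd).2.2
    have key : ∀ e, Relation.ReflTransGen R c e → e ∈ C ∧ ∃ m, JoinedVia E C x e m := by
      intro e he
      induction he with
      | refl =>
        refine ⟨hc, 1, fun t => if t = 0 then x else c, by simp, by simp, ?_, ?_⟩
        · intro t ht
          obtain rfl : t = 0 := by omega
          simpa using hsymm _ _ hcx
        · intro t h1 h2
          omega
      | @tail a b hca hab iha =>
        obtain ⟨haC, m, hm⟩ := iha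
        exact ⟨(hCmem b).2 ⟨hab.2.2.1, hab.2.2.2, (huc.trans hca).tail hab⟩,
          m + 1, hm.snoc haC hab.1⟩
    obtain ⟨hdC, m, hm⟩ := key d hcd
    exact ⟨m + 1, hm.snoc hdC hdy⟩
  have hsub : C ∪ T ⊂ S := by
    refine (Finset.ssubset_iff_of_subset ?_).2 ⟨v, hv, ?_⟩
    · exact Finset.union_subset (Finset.filter_subset _ _) (Finset.filter_subset _ _)
    · intro h
      rcases Finset.mem_union.1 h with h | h
      · exact ((hCmem v).1 h).2.1 (hloop v)
      · exact ((hTmem v).1 h).2.1 rfl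
  have hnbr : ∀ w ∈ C, ∀ i ∈ S, E w i → i ∈ C ∪ T := by
    intro w hw i hi hwi
    obtain ⟨hwS, hvw, huw⟩ := (hCmem w).1 hw
    rw [Finset.mem_union]
    by_cases hvi : E v i
    · refine Or.inr ((hTmem i).2 ⟨hi, ?_, hvi, w, hw, hwi⟩)
      rintro rfl
      exact hvw (hsymm _ _ hwi)
    · exact Or.inl ((hCmem i).2 ⟨hi, hvi, huw.tail ⟨hwi, ⟨hwS, hvw⟩, hi, hvi⟩⟩)
  suffices h : ∃ w ∈ C, IsSimplicialIn E (C ∪ T) w by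
    obtain ⟨w, hw, hs⟩ := h
    exact ⟨w, ((hCmem w).1 hw).1, ((hCmem w).1 hw).2.1, fun i hi j hj hwi hwj =>
      hs i (hnbr w hw i hi hwi) j (hnbr w hw j hj hwj) hwi hwj⟩
  by_cases hT : ∃ t ∈ T, ∃ z ∈ C ∪ T, ¬ E t z
  · -- A simplicial non-neighbour of a vertex of the clique `T` lies outside `T`.
    obtain ⟨t, ht, hz⟩ := hT
    obtain ⟨w, hw, htw, hs⟩ := ih _ hsub t (Finset.mem_union_right _ ht) hz
    rcases Finset.mem_union.1 hw with h | h
    · exact ⟨w, h, hs⟩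
    · exact absurd (hTclique t ht w h) htw
  · push Not at hT
    by_cases hCl : ∃ c ∈ C, ∃ z ∈ C ∪ T, ¬ E c z
    · obtain ⟨c, hc, hz⟩ := hCl
      obtain ⟨w, hw, hcw, hs⟩ := ih _ hsub c (Finset.mem_union_left _ hc) hz
      rcases Finset.mem_union.1 hw with h | h
      · exact ⟨w, h, hs⟩
      · exact absurd (hsymm _ _ (hT w h c (Finset.mem_union_left _ hc))) hcw
    · push Not at hCl
      refine ⟨u, huC, fun i hi j hj _ _ => ?_⟩
      rcases Finset.mem_union.1 hi with h | h
      · exact hCl i h j hj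
      · exact hT i h j hj

lemma exists_simplicial {V : Type*} {E : V → V → Prop} (hsymm : EdgeSymm E)
    (hloop : HasSelfLoops E) (hch : IsChordalRel E) {S : Finset V} (hS : S.Nonempty) :
    ∃ w ∈ S, IsSimplicialIn E S w := by
  by_cases h : ∃ v ∈ S, ∃ u ∈ S, ¬ E v u
  · obtain ⟨v, hv, hu⟩ := h
    obtain ⟨w, hw, -, hs⟩ := exists_simplicial_of_not_adj hsymm hloop hch S v hv hu
    exact ⟨w, hw, hs⟩
  · push Not at h
    obtain ⟨w, hw⟩ := hS
    exact ⟨w, hw, fun i hi j hj _ _ => h i hi j hj⟩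

/-! ### Symmetric elimination -/

/-- Completing the square: the Schur complement of `Z` at `v`, evaluated at `x`, is `Z` evaluated
at `x - ((Z x) v / Z v v) e_v`. -/
lemma schur_quadratic_form {n : ℕ} {Z : Matrix (Fin n) (Fin n) ℝ} (hZ : Z.IsSymm) {v : Fin n}
    (hd : Z v v ≠ 0) (x : Fin n → ℝ) :
    x ⬝ᵥ (Z - (Z v v)⁻¹ • vecMulVec (Z v) (Z v)) *ᵥ x =
      (x - Pi.single v ((Z v ⬝ᵥ x) / Z v v)) ⬝ᵥ
        Z *ᵥ (x - Pi.single v ((Z v ⬝ᵥ x) / Z v v)) := by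
  have h1 : ∀ a : ℝ, x ⬝ᵥ Z *ᵥ Pi.single v a = a * (Z v ⬝ᵥ x) := by
    intro a
    rw [dotProduct_mulVec, dotProduct_single, ← mulVec_transpose, hZ.eq, mul_comm]
    rfl
  have h2 : ∀ a : ℝ, ∀ y : Fin n → ℝ, Pi.single v a ⬝ᵥ Z *ᵥ y = a * (Z v ⬝ᵥ y) := by
    intro a y
    rw [single_dotProduct]
    rfl
  rw [sub_mulVec, smul_mulVec, vecMulVec_mulVec, mulVec_sub, dotProduct_sub, dotProduct_sub,
    sub_dotProduct, sub_dotProduct, h1, h2, h2, dotProduct_single]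
  simp only [dotProduct_smul, smul_eq_mul, dotProduct_comm x (Z v), op_smul_eq_smul]
  field_simp
  ring

/-- Zero fill-in factorization of a matrix supported on `S × S` and positive definite there. The
elimination order is recorded by a rank function `r`; triangularity of `M` means that a nonzero
entry `M i j` has `r j ≤ r i`. -/
lemma exists_factor {n : ℕ} {E : Fin n → Fin n → Prop} (hsymm : EdgeSymm E)
    (hloop : HasSelfLoops E) (hch : IsChordalRel E) (S : Finset (Fin n)) :
    ∀ Z : Matrix (Fin n) (Fin n) ℝ, HasSparsity E Z → (∀ i j, i ∉ S → Z i j = 0) →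
    (∀ x : Fin n → ℝ, (∀ i ∉ S, x i = 0) → x ≠ 0 → 0 < x ⬝ᵥ Z *ᵥ x) →
    ∃ (M : Matrix (Fin n) (Fin n) ℝ) (r : Fin n → ℕ), Set.InjOn r S ∧ Z = M * Mᵀ ∧
      ∀ i j, M i j ≠ 0 → i ∈ S ∧ j ∈ S ∧ E i j ∧ r j ≤ r i := by
  classical
  induction S using Finset.strongInduction with
  | H S ih =>
  intro Z hsp hsupp hpos
  rcases S.eq_empty_or_nonempty with rfl | hS
  · refine ⟨0, fun _ => 0, by simp, ?_, by simp⟩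
    ext i j
    simpa using hsupp i j
  obtain ⟨v, hv, hs⟩ := exists_simplicial hsymm hloop hch hS
  have hZs : ∀ i j, Z i j = Z j i := fun i j => hsp.1.apply j i
  have hd : 0 < Z v v := by
    have := hpos (Pi.single v 1) (fun i hi => Pi.single_eq_of_ne (by rintro rfl; exact hi hv) _)
      (by simp)
    simpa using this
  set Z' : Matrix (Fin n) (Fin n) ℝ := Z - (Z v v)⁻¹ • vecMulVec (Z v) (Z v) with hZ'
  have hZ'a : ∀ i j, Z' i j = Z i j - (Z v v)⁻¹ * (Z v i * Z v j) := fun i j => by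
    simp [hZ', vecMulVec_apply]
  have hmem : ∀ i, Z v i ≠ 0 → i ∈ S ∧ E v i := by
    intro i hi
    refine ⟨?_, ?_⟩
    · by_contra h
      exact hi (by rw [hZs]; exact hsupp i v h)
    · by_contra h
      exact hi (hsp.2 _ _ h)
  obtain ⟨M, r, hr, hM, hMr⟩ := ih (S.erase v) (Finset.erase_ssubset hv) Z' (by
      refine ⟨?_, ?_⟩
      · ext i j
        rw [transpose_apply, hZ'a, hZ'a, hZs j i, mul_comm (Z v j)]
      · intro i j hij
        have hprod : Z v i * Z v j = 0 := by
          by_contra h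
          obtain ⟨hi, hj⟩ := mul_ne_zero_iff.1 h
          exact hij (hs i (hmem i hi).1 j (hmem j hj).1 (hmem i hi).2 (hmem j hj).2)
        rw [hZ'a, hsp.2 i j hij, hprod]
        simp) (by
      intro i j hi
      rw [hZ'a]
      by_cases hiv : i = v
      · subst hiv
        field_simp
        ring
      · have hiS : i ∉ S := fun h => hi (Finset.mem_erase.2 ⟨hiv, h⟩)
        rw [hsupp i j hiS, hZs v i, hsupp i v hiS]
        simp) (by
      intro x hx hx0
      rw [schur_quadratic_form hsp.1 hd.ne']
      have hne : ∀ i, i ≠ v → (x - Pi.single v ((Z v ⬝ᵥ x) / Z v v) : Fin n → ℝ) i = x i := by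
        intro i hi
        simp [Pi.single_eq_of_ne hi]
      refine hpos _ ?_ ?_
      · intro i hi
        have hiv : i ≠ v := by
          rintro rfl
          exact hi hv
        rw [hne i hiv]
        exact hx i fun h => hi (Finset.mem_of_mem_erase h)
      · intro h0
        apply hx0
        funext i
        by_cases hiv : i = v
        · exact hx i (by simp [hiv])
        · rw [← hne i hiv, h0])
  have hMv : ∀ i, M i v = 0 := fun i => by
    by_contra h
    exact Finset.notMem_erase v S (hMr i v h).2.1
  have hsq : (Real.sqrt (Z v v))⁻¹ * (Real.sqrt (Z v v))⁻¹ = (Z v v)⁻¹ := by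
    rw [← mul_inv, Real.mul_self_sqrt hd.le]
  refine ⟨Matrix.of fun i j => if j = v then (Real.sqrt (Z v v))⁻¹ * Z v i else M i j,
    fun i => if i = v then 0 else r i + 1, ?_, ?_, ?_⟩
  · intro i hi j hj hij
    by_cases h1 : i = v <;> by_cases h2 : j = v
    · rw [h1, h2]
    · simp [h1, h2] at hij
    · simp [h1, h2] at hij
    · exact hr (by simpa [h1] using hi) (by simpa [h2] using hj) (by simpa [h1, h2] using hij)
  · ext i j
    have hterm : ∀ k, (if k = v then (Real.sqrt (Z v v))⁻¹ * Z v i else M i k) *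
        (if k = v then (Real.sqrt (Z v v))⁻¹ * Z v j else M j k) =
        M i k * M j k + if k = v then (Z v v)⁻¹ * (Z v i * Z v j) else 0 := by
      intro k
      by_cases hk : k = v
      · subst hk
        simp only [if_true, hMv, ← hsq]
        ring
      · simp [hk]
    have hij : Z' i j = ∑ k, M i k * M j k := by
      rw [hM]
      simp [Matrix.mul_apply]
    simp only [Matrix.mul_apply, Matrix.of_apply, Matrix.transpose_apply, hterm,
      Finset.sum_add_distrib, ← hij, hZ'a]
    simp
  · intro i j hne
    by_cases hj : j = v
    · subst hj
      have hi : Z j i ≠ 0 := by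
        intro h
        simp [h] at hne
      exact ⟨(hmem i hi).1, hv, hsymm _ _ (hmem i hi).2, by simp⟩
    · obtain ⟨h1, h2, h3, h4⟩ := hMr i j (by simpa [hj] using hne)
      refine ⟨Finset.mem_of_mem_erase h1, Finset.mem_of_mem_erase h2, h3, ?_⟩
      simpa [hj, Finset.ne_of_mem_erase h1] using h4

/-! ### The factorization -/

/-- **Zero fill-in sparse Cholesky factorization for chordal patterns.**
If `G(V,E)` is chordal and `Z ∈ S^n(E,0)` is positive definite, then there are a permutation
matrix `P` and a lower-triangular matrix `L` with `P Z Pᵀ = L Lᵀ` and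
`Pᵀ (L + Lᵀ) P ∈ S^n(E,0)`. -/
theorem sparse_cholesky_zero_fill_in {n : ℕ} (E : Fin n → Fin n → Prop)
    (hsymm : EdgeSymm E) (hloop : HasSelfLoops E) (hchordal : IsChordalRel E)
    (Z : Matrix (Fin n) (Fin n) ℝ) (hsp : HasSparsity E Z) (hpd : Z.PosDef) :
    ∃ P L : Matrix (Fin n) (Fin n) ℝ,
      (∃ σ : Equiv.Perm (Fin n), P = Matrix.of fun i j => if σ i = j then (1 : ℝ) else 0) ∧
      (∀ i j : Fin n, i < j → L i j = 0) ∧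
      P * Z * Pᵀ = L * Lᵀ ∧
      HasSparsity E (Pᵀ * (L + Lᵀ) * P) := by
  obtain ⟨M, r, hr, hZ, hM⟩ := exists_factor hsymm hloop hchordal univ Z hsp (by simp)
    (fun x _ hx => by simpa using hpd.dotProduct_mulVec_pos hx)
  set σ : Equiv.Perm (Fin n) := Tuple.sort r with hσ
  have hmono : Monotone (r ∘ σ) := Tuple.monotone_sort r
  have hP : (Matrix.of fun i j => if σ i = j then (1 : ℝ) else 0) =
      (1 : Matrix (Fin n) (Fin n) ℝ).submatrix σ id := by
    ext i j
    simp [Matrix.one_apply]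
  have hback : ∀ A : Matrix (Fin n) (Fin n) ℝ,
      ((1 : Matrix (Fin n) (Fin n) ℝ).submatrix σ id)ᵀ * A.submatrix σ σ *
        (1 : Matrix (Fin n) (Fin n) ℝ).submatrix σ id = A := by
    intro A
    rw [Matrix.transpose_submatrix, Matrix.submatrix_mul_equiv, Matrix.submatrix_mul_equiv]
    simp
  refine ⟨_, M.submatrix σ σ, ⟨σ, rfl⟩, ?_, ?_, ?_⟩
  · intro i j hij
    by_contra hne
    have h1 : r (σ j) ≤ r (σ i) := (hM _ _ hne).2.2.2
    have h2 : r (σ i) = r (σ j) := le_antisymm (hmono hij.le) h1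
    exact hij.ne (σ.injective (hr (by simp) (by simp) h2))
  · rw [hP, Matrix.transpose_submatrix, Matrix.transpose_submatrix, Matrix.submatrix_mul_equiv,
      ← hZ]
    ext i j
    simp [Matrix.mul_apply, Matrix.one_apply]
  · have hsum : M.submatrix σ σ + (M.submatrix σ σ)ᵀ = (M + Mᵀ).submatrix σ σ := rfl
    rw [hP, hsum, hback]
    refine ⟨by rw [Matrix.IsSymm, Matrix.transpose_add, Matrix.transpose_transpose, add_comm], ?_⟩
    intro i j hE
    have hM0 : ∀ i j, ¬ E i j → M i j = 0 := fun i j h => by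
      by_contra hne
      exact h (hM i j hne).2.2.1
    simp [hM0 i j hE, hM0 j i fun h => hE (hsymm _ _ h)]
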